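/- Assume the Diophantine setting of the context, let 0 < θ < 1 and 0 < σ ≤ 1, set C* := 13/(1−θ) and C₁ := 28·θ^{−1}(q+3)·(8(q+3)C*θ^{−1})^{2/θ}·(ln(8(q+3)C*θ^{−1}))^{2/θ+1}. Then for all finitely supported α, β : ℤ → ℕ with equal total mass |α| = |β| ≥ 1, α ≠ β, and every j ∈ ℤ with α_j + β_j ≥ 1, one has γ · exp(−σ·(∑_{i∈ℤ} ⟨i⟩^θ(α_i+β_i) − 2⟨j⟩^θ + |π|)) ≤ e^{C₁ σ^{−3/θ}} · |∑_{i∈ℤ} ω_i (α_i − β_i)|, where π := ∑_{i∈ℤ} i·(α_i − β_i). -/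

import Mathlib

open scoped BigOperators

/-- `⟨j⟩ := max(|j|,1)` as a real number. -/
noncomputable def jap (j : ℤ) : ℝ := max (|(j : ℝ)|) 1

lemma int_pair_key (u v e f : ℤ) (he : e = 1 ∨ e = -1) (hf : f = 1 ∨ f = -1)
    (hc : ¬ (u = v ∧ e + f = 0)) :
    |u| + |v| ≤ |e * u ^ 2 + f * v ^ 2| ∨ |u| + |v| ≤ |e * u + f * v| := by
  have sq : ∀ x : ℤ, |x| ≤ x ^ 2 := fun x => by
    rw [← sq_abs]; have := abs_nonneg x
    rcases eq_or_lt_of_le this with h | h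
    · rw [← h]; norm_num
    · nlinarith
  have opp : u ≠ v → |u| + |v| ≤ |u ^ 2 - v ^ 2| ∨ |u| + |v| ≤ |u - v| := by
    intro huv
    by_cases h : u = -v
    · right; subst h
      rw [show -v - v = -(v + v) by ring, abs_neg, abs_neg]
      rcases abs_cases v with h | h <;> rcases abs_cases (v + v) with h' | h' <;> omega
    · left
      have h1 : 1 ≤ |u - v| := Int.one_le_abs (sub_ne_zero.2 huv)
      have h2 : 1 ≤ |u + v| := Int.one_le_abs (by omega)
      rw [show u ^ 2 - v ^ 2 = (u - v) * (u + v) by ring, abs_mul]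
      have h3 : |u| + |v| ≤ |u - v| ∨ |u| + |v| ≤ |u + v| := by
        rcases abs_cases u with h | h <;> rcases abs_cases v with h' | h' <;>
        rcases abs_cases (u - v) with h3 | h3 <;> rcases abs_cases (u + v) with h4 | h4 <;> omega
      rcases h3 with h3 | h3 <;> nlinarith
  rcases he with rfl | rfl <;> rcases hf with rfl | rfl
  · left
    have := le_abs_self (1 * u ^ 2 + 1 * v ^ 2)
    linarith [sq u, sq v]
  · have := opp (fun h => hc ⟨h, by norm_num⟩)
    rw [show 1 * u ^ 2 + -1 * v ^ 2 = u ^ 2 - v ^ 2 by ring, show 1 * u + -1 * v = u - v by ring]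
    exact this
  · have := opp (fun h => hc ⟨h, by norm_num⟩)
    rw [show -1 * u ^ 2 + 1 * v ^ 2 = -(u ^ 2 - v ^ 2) by ring,
      show -1 * u + 1 * v = -(u - v) by ring, abs_neg, abs_neg]
    exact this
  · left
    rw [show -1 * u ^ 2 + -1 * v ^ 2 = -(u ^ 2 + v ^ 2) by ring, abs_neg]
    have := le_abs_self (u ^ 2 + v ^ 2)
    linarith [sq u, sq v]

lemma jap_one_le (j : ℤ) : 1 ≤ jap j := le_max_right _ _
lemma jap_pos (j : ℤ) : 0 < jap j := lt_of_lt_of_le one_pos (jap_one_le j)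
lemma jap_abs_le (j : ℤ) : |(j : ℝ)| ≤ jap j := le_max_left _ _
lemma jap_le_abs_add (j : ℤ) : jap j ≤ |(j : ℝ)| + 1 :=
  max_le (by linarith) (by linarith [abs_nonneg (j : ℝ)])

lemma rpow_add_tangent {θ x y : ℝ} (h0 : 0 < θ) (h1 : θ < 1) (hx : 0 < x) (hy : 0 ≤ y) :
    (x + y) ^ θ ≤ x ^ θ + θ * (x ^ (θ - 1) * y) := by
  have e : x + y = x * (1 + y / x) := by field_simp
  have h2 : (1 + y / x) ^ θ ≤ 1 + θ * (y / x) :=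
    rpow_one_add_le_one_add_mul_self (by have := div_nonneg hy hx.le; linarith) h0.le h1.le
  rw [e, Real.mul_rpow hx.le (by positivity), Real.rpow_sub_one hx.ne']
  calc x ^ θ * (1 + y / x) ^ θ ≤ x ^ θ * (1 + θ * (y / x)) := by gcongr
    _ = _ := by ring

lemma rpow_add_small {θ x y : ℝ} (h0 : 0 < θ) (h1 : θ < 1) (hy : 0 < y) (hyx : y ≤ x) :
    (x + y) ^ θ ≤ x ^ θ + θ * y ^ θ := by
  have hx : 0 < x := hy.trans_le hyx
  refine (rpow_add_tangent h0 h1 hx hy.le).trans ?_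
  have h2 : x ^ (θ - 1) ≤ y ^ (θ - 1) :=
    Real.rpow_le_rpow_of_nonpos hy hyx (by linarith)
  have h3 : y ^ (θ - 1) * y = y ^ θ := by
    rw [Real.rpow_sub_one hy.ne']; field_simp
  have h4 : x ^ (θ - 1) * y ≤ y ^ θ := by
    rw [← h3]; gcongr
  gcongr

lemma multiset_rpow_add {θ : ℝ} (h0 : 0 < θ) (h1 : θ < 1) (x0 : ℝ) (hx0 : 1 ≤ x0)
    (W : Multiset (ℤ × ℤ)) :
    (∀ w ∈ W, jap w.1 ≤ x0) → (x0 + (W.map fun w => jap w.1).sum) ^ θ ≤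
      x0 ^ θ + θ * (W.map fun w => jap w.1 ^ θ).sum := by
  induction W using Multiset.induction with
  | empty => intro _; simp
  | cons a W ih =>
    intro h
    have ih' := ih fun w hw => h w (Multiset.mem_cons_of_mem hw)
    have ha := h a (Multiset.mem_cons_self a W)
    have hS : 0 ≤ (W.map fun w => jap w.1).sum :=
      Multiset.sum_nonneg (by
        intro x hx; obtain ⟨w, _, rfl⟩ := Multiset.mem_map.1 hx; exact (jap_pos _).le)
    have h3 := rpow_add_small (x := x0 + (W.map fun w => jap w.1).sum) h0 h1 (jap_pos a.1)
      (by linarith)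
    simp only [Multiset.map_cons, Multiset.sum_cons]
    rw [show x0 + (jap a.1 + (W.map fun w => jap w.1).sum) =
      x0 + (W.map fun w => jap w.1).sum + jap a.1 by ring]
    linarith

lemma multiset_sq_rpow {s : ℝ} (h0 : 0 < s) (h1 : s ≤ 1) (W : Multiset (ℤ × ℤ)) :
    ((W.map fun w => jap w.1 ^ 2).sum) ^ s ≤ (W.map fun w => jap w.1 ^ (2 * s)).sum := by
  induction W using Multiset.induction with
  | empty => simp [Real.zero_rpow h0.ne']
  | cons a W ih =>
    have hS : 0 ≤ (W.map fun w => jap w.1 ^ 2).sum :=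
      Multiset.sum_nonneg (by
        intro x hx; obtain ⟨w, _, rfl⟩ := Multiset.mem_map.1 hx; positivity)
    simp only [Multiset.map_cons, Multiset.sum_cons]
    refine (Real.rpow_add_le_add_rpow (sq_nonneg _) hS h0.le h1).trans ?_
    rw [Real.rpow_mul (jap_pos _).le, Real.rpow_two]
    linarith

lemma multiset_abs_sum_le (W : Multiset (ℤ × ℤ)) (hW : ∀ w ∈ W, |w.2| = 1) (f g : ℤ → ℝ)
    (hfg : ∀ i, |f i| ≤ g i) :
    |(W.map fun w => (w.2 : ℝ) * f w.1).sum| ≤ (W.map fun w => g w.1).sum := by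
  induction W using Multiset.induction with
  | empty => simp
  | cons a W ih =>
    have ih' := ih fun w hw => hW w (Multiset.mem_cons_of_mem hw)
    have ha := hW a (Multiset.mem_cons_self a W)
    have ha' : |(a.2 : ℝ)| = 1 := by exact_mod_cast ha
    simp only [Multiset.map_cons, Multiset.sum_cons]
    refine (abs_add_le _ _).trans ?_
    rw [abs_mul, ha', one_mul]
    linarith [hfg a.1]

lemma two_rpow_le {s a b : ℝ} (h0 : 0 < s) (h1 : s ≤ 1) (ha : 0 ≤ a) (hb : 0 ≤ b) :
    a ^ s + b ^ s ≤ 2 * ((a + b) / 2) ^ s := by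
  have h := (Real.concaveOn_rpow h0.le h1).2 (Set.mem_Ici.2 ha) (Set.mem_Ici.2 hb)
    (show (0:ℝ) ≤ 1 / 2 by norm_num) (show (0:ℝ) ≤ 1 / 2 by norm_num) (by norm_num)
  simp only [smul_eq_mul] at h
  rw [show (a + b) / 2 = 1 / 2 * a + 1 / 2 * b by ring]
  linarith

lemma pair_bound {θ a b P R : ℝ} (h0 : 0 < θ) (h1 : θ < 1) (ha : 0 ≤ a) (hb : 0 ≤ b)
    (hP : 0 ≤ P) (hP' : P = 0 ∨ 1 ≤ P) (hR : 0 ≤ R) (h : a + b ≤ 22 + P + 11 * R) :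
    a ^ (θ / 2) + b ^ (θ / 2) ≤ 6.7 + 2 * P + 4.7 * R ^ (θ / 2) := by
  have hs : 0 < θ / 2 := by linarith
  have hs1 : θ / 2 ≤ 1 := by linarith
  refine (two_rpow_le hs hs1 ha hb).trans ?_
  have e1 : ((a + b) / 2) ^ (θ / 2) ≤ (11 + (P + 5.5 * R)) ^ (θ / 2) :=
    Real.rpow_le_rpow (by linarith) (by linarith) hs.le
  have e2 := Real.rpow_add_le_add_rpow (show (0:ℝ) ≤ 11 by norm_num)
    (show 0 ≤ P + 5.5 * R by positivity) hs.le hs1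
  have e3 := Real.rpow_add_le_add_rpow hP (show 0 ≤ 5.5 * R by positivity) hs.le hs1
  have e4 : (11:ℝ) ^ (θ / 2) ≤ 3.35 := by
    calc (11:ℝ) ^ (θ / 2) ≤ 11 ^ (1 / 2 : ℝ) :=
          Real.rpow_le_rpow_of_exponent_le (by norm_num) (by linarith)
      _ = √11 := (Real.sqrt_eq_rpow _).symm
      _ ≤ 3.35 := Real.sqrt_le_iff.2 (by norm_num)
  have e5 : (5.5:ℝ) ^ (θ / 2) ≤ 2.35 := by
    calc (5.5:ℝ) ^ (θ / 2) ≤ 5.5 ^ (1 / 2 : ℝ) :=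
          Real.rpow_le_rpow_of_exponent_le (by norm_num) (by linarith)
      _ = √5.5 := (Real.sqrt_eq_rpow _).symm
      _ ≤ 2.35 := Real.sqrt_le_iff.2 (by norm_num)
  have e6 : P ^ (θ / 2) ≤ P := by
    rcases hP' with h | h
    · rw [h, Real.zero_rpow hs.ne']
    · calc P ^ (θ / 2) ≤ P ^ (1:ℝ) := Real.rpow_le_rpow_of_exponent_le h hs1
        _ = P := Real.rpow_one P
  have e7 : (5.5 * R) ^ (θ / 2) ≤ 2.35 * R ^ (θ / 2) := by
    rw [Real.mul_rpow (by norm_num) hR]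
    gcongr
  linarith

/-- lower bound of the exponent -/
lemma exponent_lower {θ : ℝ} (h0 : 0 < θ) (h1 : θ < 1) (w1 w2 : ℤ × ℤ) (W : Multiset (ℤ × ℤ))
    (hε : ∀ w ∈ w1 ::ₘ w2 ::ₘ W, |w.2| = 1) (h2 : ∀ w ∈ W, jap w.1 ≤ jap w2.1) (P : ℝ)
    (hP : P = ((w1 ::ₘ w2 ::ₘ W).map fun w => (w.2 : ℝ) * (w.1 : ℝ)).sum) :
    (1 - θ) * ((W.map fun w => jap w.1 ^ θ).sum + |P|) ≤
      jap w2.1 ^ θ + (W.map fun w => jap w.1 ^ θ).sum - jap w1.1 ^ θ + |P| := by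
  have hW : ∀ w ∈ W, |w.2| = 1 := fun w hw => hε w (by simp [hw])
  have a1 : |(w1.2 : ℝ)| = 1 := by exact_mod_cast hε w1 (by simp)
  have a2 : |(w2.2 : ℝ)| = 1 := by exact_mod_cast hε w2 (by simp)
  have hs := multiset_abs_sum_le W hW (fun i => (i : ℝ)) jap jap_abs_le
  simp only [Multiset.map_cons, Multiset.sum_cons] at hP
  set B := (W.map fun w => (w.2 : ℝ) * (w.1 : ℝ)).sum
  set X := jap w2.1 + (W.map fun w => jap w.1).sum with hX
  have hS : 0 ≤ (W.map fun w => jap w.1).sum :=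
      Multiset.sum_nonneg (by
        intro x hx; obtain ⟨w, _, rfl⟩ := Multiset.mem_map.1 hx; exact (jap_pos _).le)
  have hX1 : 1 ≤ X := by linarith [jap_one_le w2.1]
  have k : |(w1.1 : ℝ)| ≤ X + |P| := by
    have e1 : |(w1.1 : ℝ)| = |(w1.2 : ℝ) * w1.1| := by rw [abs_mul, a1, one_mul]
    have e2 : |(w2.1 : ℝ)| = |(w2.2 : ℝ) * w2.1| := by rw [abs_mul, a2, one_mul]
    have e3 : (w1.2 : ℝ) * w1.1 = P - (w2.2 : ℝ) * w2.1 - B := by rw [hP]; ring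
    have e4 := jap_abs_le w2.1
    rw [e1, e3]
    have := abs_sub (P - (w2.2 : ℝ) * w2.1) B
    have := abs_sub P ((w2.2 : ℝ) * w2.1)
    linarith
  have k' : jap w1.1 ≤ X + |P| := max_le k (by linarith [abs_nonneg P])
  have k1 : jap w1.1 ^ θ ≤ (X + |P|) ^ θ := Real.rpow_le_rpow (jap_pos _).le k' h0.le
  have k2 := rpow_add_tangent h0 h1 (show 0 < X by linarith) (abs_nonneg P)
  have k3 : X ^ (θ - 1) ≤ 1 := Real.rpow_le_one_of_one_le_of_nonpos hX1 (by linarith)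
  have k4 : X ^ (θ - 1) * |P| ≤ |P| := by
    have := abs_nonneg P
    nlinarith
  have k5 := mul_le_mul_of_nonneg_left k4 h0.le
  have k6 := multiset_rpow_add h0 h1 (jap w2.1) (jap_one_le _) W h2
  rw [← hX] at k6
  linarith

/-- the weighted sum bound -/
lemma weighted_bound {θ : ℝ} (h0 : 0 < θ) (h1 : θ < 1) (w1 w2 : ℤ × ℤ) (W : Multiset (ℤ × ℤ))
    (hε : ∀ w ∈ w1 ::ₘ w2 ::ₘ W, |w.2| = 1)
    (hsum : ((w1 ::ₘ w2 ::ₘ W).map fun w => w.2).sum = 0) (P : ℤ)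
    (hP : (P : ℝ) = ((w1 ::ₘ w2 ::ₘ W).map fun w => (w.2 : ℝ) * (w.1 : ℝ)).sum)
    (hQ : |((w1 ::ₘ w2 ::ₘ W).map fun w => (w.2 : ℝ) * (w.1 : ℝ) ^ 2).sum| ≤
      10 * ((w1 ::ₘ w2 ::ₘ W).map fun _ => (1 : ℝ)).sum)
    (h : ℤ → ℝ) (hh : ∀ i, |h i| ≤ jap i ^ (θ / 2)) :
    ((w1 ::ₘ w2 ::ₘ W).map fun w => (w.2 : ℝ) * h w.1).sum ≤
      13 * ((W.map fun w => jap w.1 ^ θ).sum + |(P : ℝ)|) := by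
  have hW : ∀ w ∈ W, |w.2| = 1 := fun w hw => hε w (by simp [hw])
  have a1 : |(w1.2 : ℝ)| = 1 := by exact_mod_cast hε w1 (by simp)
  have a2 : |(w2.2 : ℝ)| = 1 := by exact_mod_cast hε w2 (by simp)
  have c1 : w1.2 = 1 ∨ w1.2 = -1 := by
    have := hε w1 (by simp); rcases abs_choice w1.2 with h | h <;> omega
  have c2 : w2.2 = 1 ∨ w2.2 = -1 := by
    have := hε w2 (by simp); rcases abs_choice w2.2 with h | h <;> omega
  have hs := multiset_abs_sum_le W hW (fun i => (i : ℝ)) (fun i => jap i ^ 2) (fun i => by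
    have := jap_one_le i; have := jap_abs_le i; nlinarith)
  have hs2 := multiset_abs_sum_le W hW (fun i => (i : ℝ) ^ 2) (fun i => jap i ^ 2) (fun i => by
    rw [abs_pow]; exact pow_le_pow_left₀ (abs_nonneg _) (jap_abs_le i) 2)
  have hsh := multiset_abs_sum_le W hW h (fun i => jap i ^ θ) (fun i => (hh i).trans
    (Real.rpow_le_rpow_of_exponent_le (jap_one_le i) (by linarith)))
  have hs1 : (W.map fun _ => (1 : ℝ)).sum ≤ (W.map fun w => jap w.1 ^ 2).sum :=
    Multiset.sum_map_le_sum_map _ _ (fun w _ => by have := jap_one_le w.1; nlinarith)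
  have hs1' : (W.map fun _ => (1 : ℝ)).sum ≤ (W.map fun w => jap w.1 ^ θ).sum :=
    Multiset.sum_map_le_sum_map _ _ (fun w _ => Real.one_le_rpow (jap_one_le w.1) h0.le)
  have hsR := multiset_sq_rpow (show 0 < θ / 2 by linarith) (by linarith) W
  rw [show 2 * (θ / 2) = θ by ring] at hsR
  simp only [Multiset.map_cons, Multiset.sum_cons] at hP hQ hsum ⊢
  have hR0 : 0 ≤ (W.map fun w => jap w.1 ^ 2).sum := (abs_nonneg _).trans hs
  have hT0 : 0 ≤ (W.map fun w => jap w.1 ^ θ).sum := (abs_nonneg _).trans hsh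
  have hcard : (W.map fun _ => (1 : ℝ)).sum = W.card := by simp
  have hWe : W = 0 ∨ 1 ≤ (W.map fun w => jap w.1 ^ θ).sum := by
    rcases Multiset.empty_or_exists_mem W with h | ⟨w, hw⟩
    · exact Or.inl h
    · right
      have : 1 ≤ W.card := Multiset.card_pos_iff_exists_mem.2 ⟨w, hw⟩
      have : (1:ℝ) ≤ W.card := by exact_mod_cast this
      linarith
  have hWs : W = 0 → w1.2 + w2.2 = 0 := by
    intro h; simpa [h] using hsum
  have hPW : W = 0 → (P : ℝ) = w1.2 * w1.1 + w2.2 * w2.1 := by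
    intro h; simpa [h] using hP
  clear hsum
  generalize (W.map fun w => (w.2 : ℝ) * (w.1 : ℝ)).sum = B1 at *
  generalize (W.map fun w => (w.2 : ℝ) * (w.1 : ℝ) ^ 2).sum = B2 at *
  generalize (W.map fun w => (w.2 : ℝ) * h w.1).sum = B3 at *
  generalize (W.map fun w => jap w.1 ^ θ).sum = T at *
  generalize (W.map fun w => jap w.1 ^ 2).sum = R at *
  generalize (W.map fun _ => (1 : ℝ)).sum = N at *
  have hP0 := abs_nonneg (P : ℝ)
  by_cases hc : w1.1 = w2.1 ∧ w1.2 + w2.2 = 0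
  · obtain ⟨e1, e2⟩ := hc
    have e3 : (w1.2 : ℝ) + w2.2 = 0 := by exact_mod_cast e2
    have e4 : (w1.2 : ℝ) * h w1.1 + ((w2.2 : ℝ) * h w2.1 + B3) = B3 := by
      rw [e1]; linear_combination e3 * h w2.1
    rw [e4]
    have := le_abs_self B3
    linarith
  · have hP1 : |(P : ℝ)| = 0 ∨ 1 ≤ |(P : ℝ)| := by
      rcases eq_or_ne P 0 with h | h
      · left; simp [h]
      · right; exact_mod_cast Int.one_le_abs h
    have hT1 : 1 ≤ T + |(P : ℝ)| := by
      rcases hWe with h | h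
      · have k1 := hWs h
        have k2 := hPW h
        have : P ≠ 0 := by
          rintro rfl
          apply hc
          refine ⟨?_, k1⟩
          have k3 : w1.2 * w1.1 + w2.2 * w2.1 = 0 := by exact_mod_cast k2.symm
          rcases c1 with c | c <;> rw [c] at k1 k3 <;>
            [rw [show w2.2 = -1 by omega] at k3; rw [show w2.2 = 1 by omega] at k3] <;> omega
        have : 1 ≤ |(P : ℝ)| := by exact_mod_cast Int.one_le_abs this
        linarith
      · linarith
    have hA : |(w1.1 : ℝ)| + |(w2.1 : ℝ)| ≤ 20 + |(P : ℝ)| + 11 * R := by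
      have key : |w1.1| + |w2.1| ≤ |w1.2 * w1.1 ^ 2 + w2.2 * w2.1 ^ 2| ∨
          |w1.1| + |w2.1| ≤ |w1.2 * w1.1 + w2.2 * w2.1| := by
        exact int_pair_key _ _ _ _ c1 c2 hc
      rcases key with key | key
      · have key' : |(w1.1 : ℝ)| + |(w2.1 : ℝ)| ≤
          |(w1.2 : ℝ) * (w1.1 : ℝ) ^ 2 + (w2.2 : ℝ) * (w2.1 : ℝ) ^ 2| := by exact_mod_cast key
        have := abs_sub ((w1.2 : ℝ) * (w1.1 : ℝ) ^ 2 + ((w2.2 : ℝ) * (w2.1 : ℝ) ^ 2 + B2)) B2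
        rw [show (w1.2 : ℝ) * (w1.1 : ℝ) ^ 2 + ((w2.2 : ℝ) * (w2.1 : ℝ) ^ 2 + B2) - B2 =
          (w1.2 : ℝ) * (w1.1 : ℝ) ^ 2 + (w2.2 : ℝ) * (w2.1 : ℝ) ^ 2 by ring] at this
        linarith
      · have key' : |(w1.1 : ℝ)| + |(w2.1 : ℝ)| ≤
          |(w1.2 : ℝ) * (w1.1 : ℝ) + (w2.2 : ℝ) * (w2.1 : ℝ)| := by exact_mod_cast key
        have := abs_sub (P : ℝ) B1
        rw [hP, show (w1.2 : ℝ) * (w1.1 : ℝ) + ((w2.2 : ℝ) * (w2.1 : ℝ) + B1) - B1 =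
          (w1.2 : ℝ) * (w1.1 : ℝ) + (w2.2 : ℝ) * (w2.1 : ℝ) by ring, ← hP] at this
        linarith
    have hpb := pair_bound h0 h1 (jap_pos w1.1).le (jap_pos w2.1).le hP0 hP1 hR0
      (by linarith [jap_le_abs_add w1.1, jap_le_abs_add w2.1])
    have b1 : (w1.2 : ℝ) * h w1.1 ≤ jap w1.1 ^ (θ / 2) := by
      refine (le_abs_self _).trans ?_
      rw [abs_mul, a1, one_mul]; exact hh _
    have b2 : (w2.2 : ℝ) * h w2.1 ≤ jap w2.1 ^ (θ / 2) := by
      refine (le_abs_self _).trans ?_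
      rw [abs_mul, a2, one_mul]; exact hh _
    have b3 := le_abs_self B3
    linarith

lemma log_term_le {q x m : ℝ} (hq : 0 ≤ q) (hx : 1 ≤ x) (hm : 1 ≤ m) :
    Real.log (1 + x ^ 2 * m ^ (2 + q)) ≤ 1 + 2 * Real.log x + (2 + q) * Real.log m := by
  have h1 : 1 ≤ m ^ (2 + q) := Real.one_le_rpow hm (by linarith)
  have h2 : 1 ≤ x ^ 2 := by nlinarith
  have h3 : 1 + x ^ 2 * m ^ (2 + q) ≤ 2 * (x ^ 2 * m ^ (2 + q)) := by nlinarith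
  have hm0 : 0 < m := by linarith
  have h4 := Real.log_le_log (by positivity) h3
  rw [Real.log_mul (by norm_num) (by positivity), Real.log_mul (by positivity) (by positivity),
    Real.log_pow, Real.log_rpow hm0] at h4
  have := Real.log_two_lt_d9
  push_cast at h4
  linarith

lemma term_far {q θ δ x m B : ℝ} (hq : 0 ≤ q) (h0 : 0 < θ) (h1 : θ < 1) (hδ : 0 < δ)
    (hB : B * (θ * δ) = 8 * (q + 3)) (hL : 1 ≤ Real.log B) (hB0 : 0 < B)
    (hx : 1 ≤ x) (hm : 1 ≤ m)
    (hM : (B * Real.log B) ^ (2 / θ) < m) :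
    Real.log (1 + x ^ 2 * m ^ (2 + q)) - δ * (x * m ^ (θ / 2)) ≤ 0 := by
  have ht := log_term_le hq hx hm
  have hm0 : 0 < m := by linarith
  have hBL : 0 < B * Real.log B := by positivity
  set y := m ^ (θ / 2) with hy
  have hy0 : 0 < y := by positivity
  have hyB : B * Real.log B ≤ y := by
    have := Real.rpow_le_rpow (by positivity) hM.le (show 0 ≤ θ / 2 by linarith)
    rwa [← Real.rpow_mul hBL.le, show 2 / θ * (θ / 2) = 1 by field_simp, Real.rpow_one] at this
  have hlogy : Real.log y = θ / 2 * Real.log m := by rw [hy, Real.log_rpow hm0]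
  have hly : Real.log y ≤ 2 * (y / B) := by
    have e : Real.log y = Real.log (y / B) + Real.log B := by
      rw [Real.log_div hy0.ne' hB0.ne']; ring
    have e1 := Real.log_le_sub_one_of_pos (show 0 < y / B by positivity)
    have e2 : Real.log B ≤ y / B := by rw [le_div_iff₀ hB0]; linarith
    linarith
  have hBy : 1 / B = θ * δ / (8 * (q + 3)) := by
    rw [← hB]; field_simp
  have h5 : (2 + q) * Real.log m ≤ δ * y / 2 := by
    have e1 : Real.log m = 2 / θ * Real.log y := by rw [hlogy]; field_simp
    have e2 : y / B = y * (θ * δ / (8 * (q + 3))) := by rw [← hBy]; ring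
    rw [e2] at hly
    have e3 : Real.log m ≤ 2 / θ * (2 * (y * (θ * δ / (8 * (q + 3))))) := by
      rw [e1]; gcongr
    have e4 : 2 / θ * (2 * (y * (θ * δ / (8 * (q + 3))))) = δ * y / 2 / (q + 3) := by
      field_simp; norm_num
    rw [e4] at e3
    calc (2 + q) * Real.log m ≤ (2 + q) * (δ * y / 2 / (q + 3)) := by gcongr
      _ ≤ (q + 3) * (δ * y / 2 / (q + 3)) := by
        apply mul_le_mul_of_nonneg_right (by linarith); positivity
      _ = δ * y / 2 := by field_simp
  have h6 : 24 ≤ δ * y := by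
    have e1 : B ≤ y := by nlinarith
    have e2 : 24 ≤ B * δ := by
      have : 0 < B * δ := by positivity
      nlinarith
    nlinarith
  have h7 := Real.log_le_sub_one_of_pos (show 0 < x by linarith)
  have h8 : δ * (x * y) = (δ * y) * x := by ring
  rw [h8]
  nlinarith

lemma term_near {q θ δ x m B : ℝ} (hq : 0 ≤ q) (h0 : 0 < θ) (h1 : θ < 1) (hδ : 0 < δ)
    (hB : B * (θ * δ) = 8 * (q + 3)) (hL : 1 ≤ Real.log B) (hB0 : 0 < B)
    (hx : 1 ≤ x) (hm : 1 ≤ m)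
    (hM : m ≤ (B * Real.log B) ^ (2 / θ)) :
    Real.log (1 + x ^ 2 * m ^ (2 + q)) - δ * (x * m ^ (θ / 2)) ≤
      4 * (q + 3) / θ * Real.log B := by
  have ht := log_term_le hq hx hm
  have hm0 : 0 < m := by linarith
  have hL0 : 0 < Real.log B := by linarith
  have hy1 : 1 ≤ m ^ (θ / 2) := Real.one_le_rpow hm (by linarith)
  have e0 : δ * x ≤ δ * (x * m ^ (θ / 2)) := by
    apply mul_le_mul_of_nonneg_left _ hδ.le; nlinarith
  have e1 : Real.log m ≤ 4 / θ * Real.log B := by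
    have := Real.log_le_log hm0 hM
    rw [Real.log_rpow (by positivity), Real.log_mul hB0.ne' hL0.ne'] at this
    have h2 := Real.log_le_sub_one_of_pos hL0
    have h3 : 2 / θ * (Real.log B + Real.log (Real.log B)) ≤
      2 / θ * (Real.log B + Real.log B) := by
      apply mul_le_mul_of_nonneg_left (by linarith); positivity
    calc _ ≤ _ := this
      _ ≤ _ := h3
      _ = _ := by ring
  have e2 : 2 * Real.log x ≤ δ * x - 2 + 2 * Real.log B := by
    have a1 : Real.log x = Real.log (δ * x / 2) + Real.log (2 / δ) := by
      rw [← Real.log_mul (by positivity) (by positivity)]; congr 1; field_simp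
    have a2 := Real.log_le_sub_one_of_pos (show 0 < δ * x / 2 by positivity)
    have a3 : 2 / δ ≤ B := by
      rw [div_le_iff₀ hδ]
      have : 0 < B * δ := by positivity
      nlinarith
    have a4 := Real.log_le_log (by positivity) a3
    linarith
  have e3 : (2 + q) * Real.log m ≤ (2 + q) * (4 / θ * Real.log B) := by gcongr
  have e4 : 4 * (q + 3) / θ * Real.log B =
    (2 + q) * (4 / θ * Real.log B) + 4 / θ * Real.log B := by ring
  have e5 : 4 ≤ 4 / θ := by rw [le_div_iff₀ h0]; linarith
  nlinarith

lemma sum_terms {q θ δ B : ℝ} (hq : 0 ≤ q) (h0 : 0 < θ) (h1 : θ < 1) (hδ : 0 < δ)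
    (hB : B * (θ * δ) = 8 * (q + 3)) (hL : 1 ≤ Real.log B) (hB0 : 0 < B)
    (hB1 : 1 ≤ B) (F : Finset ℤ) (x : ℤ → ℝ) (hx : ∀ n ∈ F, 1 ≤ x n) :
    ∑ n ∈ F, (Real.log (1 + x n ^ 2 * jap n ^ (2 + q)) - δ * (x n * jap n ^ (θ / 2))) ≤
      28 * θ⁻¹ * (q + 3) * (B * Real.log B) ^ (2 / θ) * Real.log B := by
  set M := (B * Real.log B) ^ (2 / θ) with hM
  have hM1 : 1 ≤ M := Real.one_le_rpow (by nlinarith) (by positivity)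
  set K := 4 * (q + 3) / θ * Real.log B with hK
  have hK0 : 0 ≤ K := by positivity
  have step : ∑ n ∈ F, (Real.log (1 + x n ^ 2 * jap n ^ (2 + q)) -
      δ * (x n * jap n ^ (θ / 2))) ≤ ∑ n ∈ F, if jap n ≤ M then K else 0 := by
    refine Finset.sum_le_sum fun n hn => ?_
    split_ifs with h
    · exact term_near hq h0 h1 hδ hB hL hB0 (hx n hn) (jap_one_le n) h
    · exact term_far hq h0 h1 hδ hB hL hB0 (hx n hn) (jap_one_le n) (not_le.1 h)
  refine step.trans ?_
  rw [← Finset.sum_filter, Finset.sum_const, nsmul_eq_mul]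
  have hsub : F.filter (fun n => jap n ≤ M) ⊆ Finset.Icc (-⌊M⌋) ⌊M⌋ := by
    intro n hn
    have h := (jap_abs_le n).trans (Finset.mem_filter.1 hn).2
    have h' : |n| ≤ ⌊M⌋ := Int.le_floor.2 (by exact_mod_cast h)
    exact Finset.mem_Icc.2 (abs_le.1 h')
  have hf0 : 0 ≤ ⌊M⌋ := Int.floor_nonneg.2 (by linarith)
  have hc := Finset.card_le_card hsub
  rw [Int.card_Icc] at hc
  have hc' : ((F.filter (fun n => jap n ≤ M)).card : ℤ) ≤ 2 * ⌊M⌋ + 1 := by omega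
  have hc'' : ((F.filter (fun n => jap n ≤ M)).card : ℝ) ≤ 2 * (⌊M⌋ : ℝ) + 1 := by
    exact_mod_cast hc'
  have hfl := Int.floor_le M
  calc _ ≤ (3 * M) * K := by
        apply mul_le_mul_of_nonneg_right _ hK0; linarith
    _ = 12 * (θ⁻¹ * (q + 3) * M * Real.log B) := by rw [hK]; ring
    _ ≤ 28 * (θ⁻¹ * (q + 3) * M * Real.log B) := by
      apply mul_le_mul_of_nonneg_right (by norm_num); positivity
    _ = _ := by ring

lemma const_bound {θ σ A : ℝ} (h0 : 0 < θ) (h1 : θ < 1) (hσ0 : 0 < σ) (hσ1 : σ ≤ 1)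
    (hA : 27 ≤ A) :
    (A / σ * Real.log (A / σ)) ^ (2 / θ) * Real.log (A / σ) ≤
      A ^ (2 / θ) * Real.log A ^ (2 / θ + 1) * σ ^ (-(3 / θ)) := by
  have hA0 : 0 < A := by linarith
  have hlA : 3 ≤ Real.log A := by
    rw [Real.le_log_iff_exp_le hA0]
    have := Real.exp_one_lt_d9
    have e : Real.exp 3 = Real.exp 1 ^ 3 := by rw [← Real.exp_nat_mul]; norm_num
    rw [e]
    calc Real.exp 1 ^ 3 ≤ 3 ^ 3 := by gcongr; linarith
      _ ≤ A := by linarith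
  set t := -Real.log σ with ht
  have ht0 : 0 ≤ t := by have := Real.log_nonpos hσ0.le hσ1; linarith
  have hL : Real.log (A / σ) = Real.log A + t := by
    rw [Real.log_div hA0.ne' hσ0.ne']; ring
  have hlA0 : 0 < Real.log A := by linarith
  have hL0 : 0 < Real.log (A / σ) := by linarith
  have hLe : Real.log (A / σ) ≤ Real.log A * Real.exp (t / 3) := by
    have := Real.add_one_le_exp (t / 3)
    rw [hL]
    nlinarith
  set p := 2 / θ + 1 with hp
  have hp0 : 0 < p := by positivity
  have hp3 : p ≤ 3 / θ := by
    have : 1 ≤ 1 / θ := by rw [le_div_iff₀ h0]; linarith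
    rw [hp, show 3 / θ = 2 / θ + 1 / θ by ring]; linarith
  have hLp : Real.log (A / σ) ^ p ≤ Real.log A ^ p * σ ^ (-(1 / θ)) := by
    calc Real.log (A / σ) ^ p ≤ (Real.log A * Real.exp (t / 3)) ^ p :=
          Real.rpow_le_rpow hL0.le hLe hp0.le
      _ = Real.log A ^ p * Real.exp (t / 3 * p) := by
          rw [Real.mul_rpow hlA0.le (Real.exp_pos _).le, ← Real.exp_mul]
      _ ≤ Real.log A ^ p * σ ^ (-(1 / θ)) := by
          rw [Real.rpow_def_of_pos hσ0]
          refine mul_le_mul_of_nonneg_left (Real.exp_le_exp.2 ?_) (by positivity)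
          calc t / 3 * p ≤ t / 3 * (3 / θ) := by gcongr
            _ = Real.log σ * -(1 / θ) := by rw [ht]; ring
  calc (A / σ * Real.log (A / σ)) ^ (2 / θ) * Real.log (A / σ)
      = A ^ (2 / θ) * σ ^ (-(2 / θ)) * Real.log (A / σ) ^ p := by
        rw [Real.mul_rpow (by positivity) hL0.le, Real.div_rpow hA0.le hσ0.le, hp,
          Real.rpow_add_one hL0.ne', Real.rpow_neg hσ0.le]
        ring
    _ ≤ A ^ (2 / θ) * σ ^ (-(2 / θ)) * (Real.log A ^ p * σ ^ (-(1 / θ))) := by gcongr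
    _ = A ^ (2 / θ) * Real.log A ^ p * (σ ^ (-(2 / θ)) * σ ^ (-(1 / θ))) := by ring
    _ = _ := by
        rw [← Real.rpow_add hσ0]; congr 2; ring

lemma toMultiset_map_sum (α : ℤ →₀ ℕ) (s : Finset ℤ) (hs : α.support ⊆ s) (g : ℤ → ℝ) :
    ((Finsupp.toMultiset α).map g).sum = ∑ i ∈ s, (α i : ℝ) * g i := by
  rw [Finset.sum_multiset_map_count, Finsupp.toFinset_toMultiset]
  simp only [Finsupp.count_toMultiset, nsmul_eq_mul]
  refine Finset.sum_subset hs fun i _ hi => ?_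
  rw [Finsupp.notMem_support_iff.1 hi]; simp

/-- the signed multiset of all indices -/
noncomputable def signedW (α β : ℤ →₀ ℕ) : Multiset (ℤ × ℤ) :=
  (Finsupp.toMultiset α).map (fun i => (i, 1)) + (Finsupp.toMultiset β).map (fun i => (i, -1))

lemma signedW_sum (α β : ℤ →₀ ℕ) (f : ℤ × ℤ → ℝ) :
    ((signedW α β).map f).sum =
      ∑ i ∈ α.support ∪ β.support, ((α i : ℝ) * f (i, 1) + (β i : ℝ) * f (i, -1)) := by
  rw [signedW, Multiset.map_add, Multiset.sum_add, Multiset.map_map, Multiset.map_map,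
    Finset.sum_add_distrib]
  congr 1
  · exact toMultiset_map_sum α _ Finset.subset_union_left (fun i => f (i, 1))
  · exact toMultiset_map_sum β _ Finset.subset_union_right (fun i => f (i, -1))

lemma signedW_eps (α β : ℤ →₀ ℕ) : ∀ w ∈ signedW α β, |w.2| = 1 := by
  intro w hw
  rcases Multiset.mem_add.1 hw with h | h <;>
    obtain ⟨i, _, rfl⟩ := Multiset.mem_map.1 h <;> simp

lemma exists_max_split (W : Multiset (ℤ × ℤ)) (h : W ≠ 0) :
    ∃ w W', W = w ::ₘ W' ∧ ∀ v ∈ W, jap v.1 ≤ jap w.1 := by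
  obtain ⟨w, hw, hmax⟩ := Finset.exists_max_image W.toFinset (fun w => jap w.1)
    (by rwa [Multiset.toFinset_nonempty])
  obtain ⟨W', hW'⟩ := Multiset.exists_cons_of_mem (Multiset.mem_toFinset.1 hw)
  exact ⟨w, W', hW', fun v hv => hmax v (Multiset.mem_toFinset.2 hv)⟩

/-- Combinatorial part of the estimate. -/
lemma combinatorial_part {θ : ℝ} (h0 : 0 < θ) (h1 : θ < 1) (α β : ℤ →₀ ℕ)
    (hmass : (α.sum fun _ n => n) = β.sum fun _ n => n)
    (hmass1 : 1 ≤ α.sum fun _ n => n)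
    (j : ℤ) (hj : 1 ≤ α j + β j) (P : ℤ)
    (hP : (P : ℝ) = ∑ i ∈ α.support ∪ β.support, (i : ℝ) * ((α i : ℝ) - (β i : ℝ))) (S : ℝ)
    (hS : S = (∑ i ∈ α.support ∪ β.support, jap i ^ θ * ((α i : ℝ) + (β i : ℝ))) -
          2 * jap j ^ θ + |(P : ℝ)|) :
    0 ≤ S ∧ (|∑ i ∈ α.support ∪ β.support, (i : ℝ) ^ 2 * ((α i : ℝ) - (β i : ℝ))| ≤
        10 * ∑ i ∈ α.support ∪ β.support, |(α i : ℝ) - (β i : ℝ)| →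
      ∑ i ∈ α.support ∪ β.support, |(α i : ℝ) - (β i : ℝ)| * jap i ^ (θ / 2) ≤
        13 / (1 - θ) * S) := by
  have hcardA : (Finsupp.toMultiset α).card = α.sum fun _ n => n := Finsupp.card_toMultiset α
  have hcardB : (Finsupp.toMultiset β).card = β.sum fun _ n => n := Finsupp.card_toMultiset β
  have hcard : 2 ≤ (signedW α β).card := by
    simp only [signedW, Multiset.card_add, Multiset.card_map]; omega
  have hε := signedW_eps α β
  have hsum : ((signedW α β).map fun w => w.2).sum = 0 := by
    simp [signedW, Multiset.map_map, hcardA, hcardB, hmass]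
  have hjW : ∃ w ∈ signedW α β, w.1 = j := by
    have : α j ≠ 0 ∨ β j ≠ 0 := by omega
    rcases this with h | h
    · exact ⟨(j, 1), Multiset.mem_add.2 (Or.inl (Multiset.mem_map.2 ⟨j, by simpa using h, rfl⟩)), rfl⟩
    · exact ⟨(j, -1), Multiset.mem_add.2 (Or.inr (Multiset.mem_map.2 ⟨j, by simpa using h, rfl⟩)), rfl⟩
  have sgn : ∀ g : ℤ → ℝ, ((signedW α β).map fun w => (w.2 : ℝ) * g w.1).sum =
      ∑ i ∈ α.support ∪ β.support, g i * ((α i : ℝ) - (β i : ℝ)) := by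
    intro g; rw [signedW_sum]
    refine Finset.sum_congr rfl fun i _ => ?_
    push_cast; ring
  have pos : ∀ g : ℤ → ℝ, ((signedW α β).map fun w => g w.1).sum =
      ∑ i ∈ α.support ∪ β.support, g i * ((α i : ℝ) + (β i : ℝ)) := by
    intro g; rw [signedW_sum]
    refine Finset.sum_congr rfl fun i _ => ?_
    ring
  rw [← pos (fun i => jap i ^ θ)] at hS
  have hP' := hP
  rw [← sgn (fun i => (i : ℝ))] at hP'
  have sgn2 := sgn (fun i => (i : ℝ) ^ 2)
  have pos1 := pos (fun _ => 1)
  have sgnh := sgn (fun i => SignType.sign ((α i : ℝ) - (β i : ℝ)) * jap i ^ (θ / 2))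
  generalize signedW α β = W at *
  obtain ⟨w1, W1, rfl, hmax1⟩ := exists_max_split W (by rintro rfl; simp at hcard)
  obtain ⟨w2, W, rfl, hmax2⟩ := exists_max_split W1 (by rintro rfl; simp at hcard)
  have hlow := exponent_lower h0 h1 w1 w2 W hε
    (fun w hw => hmax2 w (Multiset.mem_cons_of_mem hw)) P hP'
  obtain ⟨w, hw, rfl⟩ := hjW
  have hj1 : jap w.1 ^ θ ≤ jap w1.1 ^ θ := Real.rpow_le_rpow (jap_pos _).le (hmax1 w hw) h0.le
  have hSlow : (1 - θ) * ((W.map fun w => jap w.1 ^ θ).sum + |(P : ℝ)|) ≤ S := by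
    simp only [Multiset.map_cons, Multiset.sum_cons] at hS
    linarith
  have hT0 : 0 ≤ (W.map fun w => jap w.1 ^ θ).sum :=
      Multiset.sum_nonneg (by
        intro x hx; obtain ⟨w, _, rfl⟩ := Multiset.mem_map.1 hx
        exact (Real.rpow_pos_of_pos (jap_pos _) _).le)
  have hθ' : 0 < 1 - θ := by linarith
  refine ⟨le_trans (by positivity) hSlow, fun hQ => ?_⟩
  have hwb := weighted_bound h0 h1 w1 w2 W hε hsum P hP' (by
      rw [sgn2, pos1]
      refine hQ.trans ?_
      gcongr with i hi
      rw [one_mul]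
      refine (abs_sub _ _).trans ?_
      simp) (fun i => SignType.sign ((α i : ℝ) - (β i : ℝ)) * jap i ^ (θ / 2)) (by
      intro i
      have hp := Real.rpow_pos_of_pos (jap_pos i) (θ / 2)
      rw [abs_mul, abs_of_pos hp]
      refine mul_le_of_le_one_left hp.le ?_
      rcases lt_trichotomy ((α i : ℝ) - (β i : ℝ)) 0 with h | h | h <;> simp [h])
  rw [sgnh] at hwb
  have e : ∑ i ∈ α.support ∪ β.support, |(α i : ℝ) - (β i : ℝ)| * jap i ^ (θ / 2) =
     ∑ i ∈ α.support ∪ β.support, SignType.sign ((α i : ℝ) - (β i : ℝ)) * jap i ^ (θ / 2) *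
      ((α i : ℝ) - (β i : ℝ)) := by
    refine Finset.sum_congr rfl fun i _ => ?_
    rw [← sign_mul_self ((α i : ℝ) - (β i : ℝ))]; ring
  rw [e]
  refine hwb.trans ?_
  rw [div_mul_eq_mul_div, le_div_iff₀ hθ']
  linarith

/-- (Homological-equation small-divisor estimate, Gevrey case.) Under the
Diophantine conditions on `ω`, with `C* := 13/(1−θ)` and
`C₁ := 28θ⁻¹(q+3)(8(q+3)C*θ⁻¹)^{2/θ}(ln(8(q+3)C*θ⁻¹))^{2/θ+1}`, for all finitely supported
`α ≠ β : ℤ → ℕ` with equal total mass `≥ 1` and every `j` with `α_j + β_j ≥ 1`,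
`γ·exp(−σ(∑_i ⟨i⟩^θ(α_i+β_i) − 2⟨j⟩^θ + |π|)) ≤ e^{C₁σ^{−3/θ}}·|∑_i ω_i(α_i−β_i)|`. -/
theorem gevrey_small_divisor_estimate
    (q γ θ σ : ℝ) (hq : 0 ≤ q) (hγ0 : 0 < γ) (hγ1 : γ ≤ 1)
    (hθ0 : 0 < θ) (hθ1 : θ < 1) (hσ0 : 0 < σ) (hσ1 : σ ≤ 1)
    (ω : ℤ → ℝ)
    (hω : ∀ j : ℤ, |ω j - (j : ℝ) ^ 2| * jap j ^ q ≤ 1 / 2)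
    (hdio : ∀ ℓ : ℤ →₀ ℤ, ℓ ≠ 0 →
      γ * ∏ n ∈ ℓ.support, (1 + (ℓ n : ℝ) ^ 2 * jap n ^ (2 + q))⁻¹ <
        |∑ n ∈ ℓ.support, ω n * (ℓ n : ℝ)|)
    (α β : ℤ →₀ ℕ) (hne : α ≠ β)
    (hmass : (α.sum fun _ n => n) = β.sum fun _ n => n)
    (hmass1 : 1 ≤ α.sum fun _ n => n)
    (π : ℝ)
    (hπ : π = ∑ i ∈ α.support ∪ β.support, (i : ℝ) * ((α i : ℝ) - (β i : ℝ)))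
    (j : ℤ) (hj : 1 ≤ α j + β j) :
    γ * Real.exp (-σ *
        ((∑ i ∈ α.support ∪ β.support, jap i ^ θ * ((α i : ℝ) + (β i : ℝ))) -
          2 * jap j ^ θ + |π|)) ≤
      Real.exp
          ((28 * θ⁻¹ * (q + 3) * (8 * (q + 3) * (13 / (1 - θ)) * θ⁻¹) ^ (2 / θ) *
              Real.log (8 * (q + 3) * (13 / (1 - θ)) * θ⁻¹) ^ (2 / θ + 1)) *
            σ ^ (-(3 / θ))) *
        |∑ i ∈ α.support ∪ β.support, ω i * ((α i : ℝ) - (β i : ℝ))| := by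
  obtain ⟨P, hPP⟩ : ∃ P : ℤ, π = (P : ℝ) :=
    ⟨∑ i ∈ α.support ∪ β.support, i * ((α i : ℤ) - (β i : ℤ)), by rw [hπ]; push_cast; rfl⟩
  rw [hPP] at hπ ⊢
  clear hPP π
  set S := (∑ i ∈ α.support ∪ β.support, jap i ^ θ * ((α i : ℝ) + (β i : ℝ))) -
          2 * jap j ^ θ + |(P : ℝ)| with hS
  obtain ⟨hS0, hcomb⟩ := combinatorial_part hθ0 hθ1 α β hmass hmass1 j hj P hπ S hS
  set U := α.support ∪ β.support with hU
  have hθ' : 0 < 1 - θ := by linarith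
  set A := 8 * (q + 3) * (13 / (1 - θ)) * θ⁻¹ with hA
  have hA27 : 27 ≤ A := by
    have e1 : 13 ≤ 13 / (1 - θ) := by rw [le_div_iff₀ hθ']; linarith
    have e2 : 1 ≤ θ⁻¹ := (one_le_inv₀ hθ0).2 hθ1.le
    calc (27:ℝ) ≤ 8 * (0 + 3) * 13 * 1 := by norm_num
      _ ≤ A := by rw [hA]; gcongr
  have hA0 : 0 < A := by linarith
  have hlogA : 0 < Real.log A := Real.log_pos (by linarith)
  set C := 28 * θ⁻¹ * (q + 3) * A ^ (2 / θ) * Real.log A ^ (2 / θ + 1) * σ ^ (-(3 / θ)) with hC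
  have hC0 : 0 ≤ C := by positivity
  -- the integer vector
  set ℓ : ℤ →₀ ℤ := α.mapRange (fun n : ℕ => (n : ℤ)) (by simp) -
    β.mapRange (fun n : ℕ => (n : ℤ)) (by simp) with hℓ
  have hℓi : ∀ i, ℓ i = (α i : ℤ) - (β i : ℤ) := fun i => by simp [hℓ]
  have hℓr : ∀ i, (ℓ i : ℝ) = (α i : ℝ) - (β i : ℝ) := fun i => by rw [hℓi]; push_cast; rfl
  have hℓ0 : ℓ ≠ 0 := by
    intro h
    apply hne
    ext i
    have := hℓi i
    rw [h] at this
    simp at this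
    omega
  have hsub : ℓ.support ⊆ U := by
    intro i hi
    rw [Finsupp.mem_support_iff, hℓi] at hi
    rw [hU, Finset.mem_union, Finsupp.mem_support_iff, Finsupp.mem_support_iff]
    omega
  simp only [← hℓr] at hcomb ⊢
  have hone : ∀ n ∈ ℓ.support, 1 ≤ |(ℓ n : ℝ)| := by
    intro n hn
    exact_mod_cast Int.one_le_abs (Finsupp.mem_support_iff.1 hn)
  by_cases hQ : |∑ i ∈ U, (i : ℝ) ^ 2 * (ℓ i : ℝ)| ≤ 10 * ∑ i ∈ U, |(ℓ i : ℝ)|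
  · have hw := hcomb hQ
    have hd := hdio ℓ hℓ0
    rw [Finset.sum_subset hsub (fun i _ hi => by
      rw [Finsupp.notMem_support_iff.1 hi]; simp)] at hd
    set δ := σ / (13 / (1 - θ)) with hδ
    have hδ0 : 0 < δ := by positivity
    have hB : A / σ * (θ * δ) = 8 * (q + 3) := by
      rw [hA, hδ]; field_simp
    have hB27 : 27 ≤ A / σ := by rw [le_div_iff₀ hσ0]; nlinarith
    have hL1 : 1 ≤ Real.log (A / σ) := by
      rw [Real.le_log_iff_exp_le (by linarith)]
      linarith [Real.exp_one_lt_d9]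
    have hst := sum_terms hq hθ0 hθ1 hδ0 hB hL1 (by linarith) (by linarith) ℓ.support
      (fun n => |(ℓ n : ℝ)|) hone
    have hcb := const_bound hθ0 hθ1 hσ0 hσ1 hA27
    have hw' : ∑ n ∈ ℓ.support, |(ℓ n : ℝ)| * jap n ^ (θ / 2) ≤ 13 / (1 - θ) * S :=
      (Finset.sum_le_sum_of_subset_of_nonneg hsub (fun i _ _ =>
        mul_nonneg (abs_nonneg _) (Real.rpow_pos_of_pos (jap_pos i) _).le)).trans hw
    rw [Finset.sum_sub_distrib, ← Finset.mul_sum] at hst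
    have hδS : δ * ∑ n ∈ ℓ.support, |(ℓ n : ℝ)| * jap n ^ (θ / 2) ≤ σ * S := by
      calc _ ≤ δ * (13 / (1 - θ) * S) := by gcongr
        _ = σ * S := by rw [hδ]; field_simp
    have hCle : 28 * θ⁻¹ * (q + 3) * (A / σ * Real.log (A / σ)) ^ (2 / θ) * Real.log (A / σ) ≤ C := by
      calc _ = 28 * θ⁻¹ * (q + 3) *
            ((A / σ * Real.log (A / σ)) ^ (2 / θ) * Real.log (A / σ)) := by ring
        _ ≤ 28 * θ⁻¹ * (q + 3) *
            (A ^ (2 / θ) * Real.log A ^ (2 / θ + 1) * σ ^ (-(3 / θ))) := by gcongr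
        _ = C := by rw [hC]; ring
    have hpos : ∀ n ∈ ℓ.support, 0 < 1 + (ℓ n : ℝ) ^ 2 * jap n ^ (2 + q) := fun n _ => by
      have := Real.rpow_pos_of_pos (jap_pos n) (2 + q)
      positivity
    have hprod : ∏ n ∈ ℓ.support, (1 + (ℓ n : ℝ) ^ 2 * jap n ^ (2 + q))⁻¹ =
        Real.exp (-∑ n ∈ ℓ.support, Real.log (1 + |(ℓ n : ℝ)| ^ 2 * jap n ^ (2 + q))) := by
      rw [← Finset.sum_neg_distrib, Real.exp_sum]
      refine Finset.prod_congr rfl fun n hn => ?_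
      rw [sq_abs, Real.exp_neg, Real.exp_log (hpos n hn)]
    rw [hprod] at hd
    calc γ * Real.exp (-σ * S) ≤ γ * (Real.exp C *
          Real.exp (-∑ n ∈ ℓ.support, Real.log (1 + |(ℓ n : ℝ)| ^ 2 * jap n ^ (2 + q)))) := by
          rw [← Real.exp_add]
          refine mul_le_mul_of_nonneg_left (Real.exp_le_exp.2 ?_) hγ0.le
          linarith
      _ = Real.exp C * (γ *
          Real.exp (-∑ n ∈ ℓ.support, Real.log (1 + |(ℓ n : ℝ)| ^ 2 * jap n ^ (2 + q)))) := by ring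
      _ ≤ _ := mul_le_mul_of_nonneg_left hd.le (Real.exp_pos _).le
  · have hdiv : 1 ≤ |∑ i ∈ U, ω i * (ℓ i : ℝ)| := by
      have hω' : ∀ i, |ω i - (i : ℝ) ^ 2| ≤ 1 / 2 := fun i =>
        (le_mul_of_one_le_right (abs_nonneg _) (Real.one_le_rpow (jap_one_le i) hq)).trans (hω i)
      have e1 : |∑ i ∈ U, (ω i - (i : ℝ) ^ 2) * (ℓ i : ℝ)| ≤ 1 / 2 * ∑ i ∈ U, |(ℓ i : ℝ)| := by
        rw [Finset.mul_sum]
        refine (Finset.abs_sum_le_sum_abs _ _).trans (Finset.sum_le_sum fun i _ => ?_)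
        rw [abs_mul]
        exact mul_le_mul_of_nonneg_right (hω' i) (abs_nonneg _)
      have e2 : ∑ i ∈ U, (i : ℝ) ^ 2 * (ℓ i : ℝ) = ∑ i ∈ U, ω i * (ℓ i : ℝ) -
          ∑ i ∈ U, (ω i - (i : ℝ) ^ 2) * (ℓ i : ℝ) := by
        rw [← Finset.sum_sub_distrib]
        refine Finset.sum_congr rfl fun i _ => ?_
        ring
      have e3 := abs_sub (∑ i ∈ U, ω i * (ℓ i : ℝ)) (∑ i ∈ U, (ω i - (i : ℝ) ^ 2) * (ℓ i : ℝ))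
      rw [← e2] at e3
      obtain ⟨n, hn⟩ := Finsupp.support_nonempty_iff.2 hℓ0
      have e4 : |(ℓ n : ℝ)| ≤ ∑ i ∈ U, |(ℓ i : ℝ)| :=
        Finset.single_le_sum (f := fun i => |(ℓ i : ℝ)|) (fun i _ => abs_nonneg _) (hsub hn)
      have e5 := hone n hn
      linarith
    have k1 : Real.exp (-σ * S) ≤ 1 := Real.exp_le_one_iff.2 (by nlinarith)
    have k2 : 1 ≤ Real.exp C := Real.one_le_exp hC0
    have k3 := Real.exp_pos (-σ * S)
    nlinarith
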